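/- Let A be a finite alphabet and n a positive integer, and let P = [p_1, …, p_{|A|}] be a probability mass function such that n·p_i is a positive integer for every i (so 0 < p_i < 1). Then 2^{n·H(P)} / √( (8n)^{|A|−1} · Π_{i=1}^{|A|} p_i ) ≤ n! / Π_{i=1}^{|A|} (n·p_i)! ≤ 2^{n·H(P)} / √( (2πn)^{|A|−1} · Π_{i=1}^{|A|} p_i ). -/

import Mathlib

/-- Entropy (base 2) of a pmf on a finite alphabet. -/
noncomputable def entropy {A : Type*} [Fintype A] (P : A → ℝ) : ℝ :=
  -∑ a, P a * Real.logb 2 (P a)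

/-!
For `L > 0` write `m! = (stirlingSeq m / √L) * √(2 * L * m) * (m / e) ^ m`. Substituting this for
all factorials, the powers `(m / e) ^ m` combine to `2 ^ (n * H(P))` and the square roots to the
denominator of the claim with constant `2 * L`, so the multinomial coefficient is exactly
`2 ^ (n * H(P)) / √((2 * L * n) ^ (|A| - 1) * ∏ i, P i)` times `f n / ∏ i, f (c i)`, where
`f := stirlingSeq / √L`.

* For `L = π` the function `f` decreases to `1`, hence is submultiplicative:
  `f (a + b) ≤ f a ≤ f a * f b`.
* For `L = 4` it is supermultiplicative: the decrements of `log stirlingSeq` decrease, so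
  `stirlingSeq a * stirlingSeq b / stirlingSeq (a + b)` is largest at `a = b = 1`, where its value
  is `2`.
-/

section SubmultiplicativeOn

variable {ι M R : Type*} [AddCommMonoid M] [CommSemiring R] [PartialOrder R] [IsOrderedRing R]
  {p : M → Prop} {f : M → R} {s : Finset ι} {g : ι → M}

lemma prod_le_apply_sum_of_supermultiplicative_on (hp_add : ∀ x y, p x → p y → p (x + y))
    (hf_nonneg : ∀ x, p x → 0 ≤ f x) (hf : ∀ x y, p x → p y → f x * f y ≤ f (x + y))
    (hs : s.Nonempty) (hg : ∀ i ∈ s, p (g i)) :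
    ∏ i ∈ s, f (g i) ≤ f (∑ i ∈ s, g i) := by
  induction hs using Finset.Nonempty.cons_induction with
  | singleton i => simp
  | cons i s hi hs ih =>
    obtain ⟨hgi, hgs⟩ := (Finset.forall_mem_cons hi _).mp hg
    have hp_sum : p (∑ j ∈ s, g j) := Finset.sum_induction_nonempty g p hp_add hs hgs
    rw [Finset.prod_cons, Finset.sum_cons]
    exact (mul_le_mul_of_nonneg_left (ih hgs) (hf_nonneg _ hgi)).trans (hf _ _ hgi hp_sum)

lemma apply_sum_le_prod_of_submultiplicative_on (hp_add : ∀ x y, p x → p y → p (x + y))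
    (hf_nonneg : ∀ x, p x → 0 ≤ f x) (hf : ∀ x y, p x → p y → f (x + y) ≤ f x * f y)
    (hs : s.Nonempty) (hg : ∀ i ∈ s, p (g i)) :
    f (∑ i ∈ s, g i) ≤ ∏ i ∈ s, f (g i) := by
  induction hs using Finset.Nonempty.cons_induction with
  | singleton i => simp
  | cons i s hi hs ih =>
    obtain ⟨hgi, hgs⟩ := (Finset.forall_mem_cons hi _).mp hg
    have hp_sum : p (∑ j ∈ s, g j) := Finset.sum_induction_nonempty g p hp_add hs hgs
    rw [Finset.prod_cons, Finset.sum_cons]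
    exact (hf _ _ hgi hp_sum).trans (mul_le_mul_of_nonneg_left (ih hgs) (hf_nonneg _ hgi))

end SubmultiplicativeOn

section AntitoneDecrements

variable {G : Type*} [AddCommGroup G] [PartialOrder G] [IsOrderedAddMonoid G] {x : ℕ → G}

lemma antitone_sub_shift_of_antitone_sub_succ (hx : Antitone fun m ↦ x m - x (m + 1)) (k : ℕ) :
    Antitone fun m ↦ x m - x (m + k) := by
  have telescope (m : ℕ) :
      x m - x (m + k) = ∑ i ∈ Finset.range k, (x (m + i) - x (m + i + 1)) :=
    (Finset.sum_range_sub' (fun i ↦ x (m + i)) k).symm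
  intro m m' hmm'
  simp only [telescope]
  exact Finset.sum_le_sum fun i _ ↦ hx (Nat.add_le_add_right hmm' i)

lemma add_sub_apply_add_succ_le_of_antitone_sub_succ
    (hx : Antitone fun m ↦ x m - x (m + 1)) (a b : ℕ) :
    x a + x b - x (a + b + 1) ≤ x 0 + x 0 - x 1 := by
  have shift_a : x a - x (a + (b + 1)) ≤ x 0 - x (0 + (b + 1)) :=
    antitone_sub_shift_of_antitone_sub_succ hx (b + 1) a.zero_le
  have shift_b : x b - x (b + 1) ≤ x 0 - x (0 + 1) := hx b.zero_le
  rw [zero_add] at shift_a shift_b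
  calc x a + x b - x (a + b + 1)
      = (x a - x (a + (b + 1))) + (x b - x (b + 1)) + x (b + 1) := by rw [add_assoc a b 1]; abel
    _ ≤ (x 0 - x (b + 1)) + (x 0 - x 1) + x (b + 1) := by gcongr
    _ = x 0 + x 0 - x 1 := by abel

end AntitoneDecrements

section StirlingSeq

open Stirling

lemma stirlingSeq_pos {n : ℕ} (hn : n ≠ 0) : 0 < stirlingSeq n := by
  obtain ⟨m, rfl⟩ := Nat.exists_eq_succ_of_ne_zero hn
  exact stirlingSeq'_pos m

lemma antitone_log_stirlingSeq_sub_succ :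
    Antitone fun m ↦ Real.log (stirlingSeq (m + 1)) - Real.log (stirlingSeq (m + 1 + 1)) := by
  intro m m' hmm'
  refine hasSum_le (fun k ↦ ?_) (log_stirlingSeq_sdiff_hasSum m') (log_stirlingSeq_sdiff_hasSum m)
  gcongr

lemma stirlingSeq_one_mul_self : stirlingSeq 1 * stirlingSeq 1 = 2 * stirlingSeq 2 := by
  have sqrt_four : √(2 * 2 : ℝ) = 2 := Real.sqrt_mul_self zero_le_two
  have stirlingSeq_two : stirlingSeq 2 = Real.exp 1 ^ 2 / 4 := by
    simp only [stirlingSeq, Nat.factorial_two, Nat.cast_ofNat, sqrt_four]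
    field_simp
    norm_num
  rw [stirlingSeq_one, stirlingSeq_two, div_mul_div_comm, Real.mul_self_sqrt zero_le_two]
  ring

lemma stirlingSeq_mul_le {a b : ℕ} (ha : a ≠ 0) (hb : b ≠ 0) :
    stirlingSeq a * stirlingSeq b ≤ 2 * stirlingSeq (a + b) := by
  obtain ⟨a, rfl⟩ := Nat.exists_eq_succ_of_ne_zero ha
  obtain ⟨b, rfl⟩ := Nat.exists_eq_succ_of_ne_zero hb
  rw [show a.succ + b.succ = a + b + 1 + 1 by lia]
  have pos := stirlingSeq'_pos
  have log_one : Real.log (stirlingSeq 1) + Real.log (stirlingSeq 1) =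
      Real.log 2 + Real.log (stirlingSeq 2) := by
    rw [← Real.log_mul (pos 0).ne' (pos 0).ne', ← Real.log_mul two_ne_zero (pos 1).ne',
      stirlingSeq_one_mul_self]
  have log_le : Real.log (stirlingSeq (a + 1)) + Real.log (stirlingSeq (b + 1)) -
      Real.log (stirlingSeq (a + b + 1 + 1)) ≤
      Real.log (stirlingSeq 1) + Real.log (stirlingSeq 1) - Real.log (stirlingSeq 2) :=
    add_sub_apply_add_succ_le_of_antitone_sub_succ antitone_log_stirlingSeq_sub_succ a b
  rw [← Real.log_le_log_iff (mul_pos (pos a) (pos b)) (mul_pos two_pos (pos _)),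
    Real.log_mul (pos a).ne' (pos b).ne', Real.log_mul two_ne_zero (pos _).ne']
  linarith

lemma sqrt_pi_mul_stirlingSeq_add_le {a b : ℕ} (ha : a ≠ 0) (hb : b ≠ 0) :
    √Real.pi * stirlingSeq (a + b) ≤ stirlingSeq a * stirlingSeq b := by
  obtain ⟨b, rfl⟩ := Nat.exists_eq_succ_of_ne_zero hb
  exact mul_le_mul (sqrt_pi_le_stirlingSeq ha) (stirlingSeq'_antitone (Nat.le_add_left b a))
    (stirlingSeq'_pos _).le (stirlingSeq_pos ha).le

lemma prod_stirlingSeq_div_two_le {ι : Type*} {s : Finset ι} {c : ι → ℕ} (hs : s.Nonempty)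
    (hc : ∀ i ∈ s, c i ≠ 0) :
    ∏ i ∈ s, stirlingSeq (c i) / 2 ≤ stirlingSeq (∑ i ∈ s, c i) / 2 := by
  refine prod_le_apply_sum_of_supermultiplicative_on (p := (· ≠ 0))
    (f := fun m ↦ stirlingSeq m / 2) (by lia)
    (fun m hm ↦ (half_pos (stirlingSeq_pos hm)).le) (fun a b ha hb ↦ ?_) hs hc
  linarith [stirlingSeq_mul_le ha hb]

lemma stirlingSeq_sum_div_sqrt_pi_le {ι : Type*} {s : Finset ι} {c : ι → ℕ} (hs : s.Nonempty)
    (hc : ∀ i ∈ s, c i ≠ 0) :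
    stirlingSeq (∑ i ∈ s, c i) / √Real.pi ≤ ∏ i ∈ s, stirlingSeq (c i) / √Real.pi := by
  have sqrt_pi_pos : 0 < √Real.pi := Real.sqrt_pos.mpr Real.pi_pos
  refine apply_sum_le_prod_of_submultiplicative_on (p := (· ≠ 0))
    (f := fun m ↦ stirlingSeq m / √Real.pi) (by lia)
    (fun m hm ↦ (div_pos (stirlingSeq_pos hm) sqrt_pi_pos).le) (fun a b ha hb ↦ ?_) hs hc
  rw [div_mul_div_comm, ← mul_div_mul_left _ _ sqrt_pi_pos.ne']
  exact div_le_div_of_nonneg_right (sqrt_pi_mul_stirlingSeq_add_le ha hb) (by positivity)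

lemma factorial_eq_stirlingSeq_div_sqrt_mul {n : ℕ} (hn : n ≠ 0) {L : ℝ} (hL : 0 < L) :
    (n.factorial : ℝ) = stirlingSeq n / √L * √(2 * L * n) * (n / Real.exp 1) ^ n := by
  have sqrt_split : √(2 * L * n) = √L * √(2 * n) := by
    rw [← Real.sqrt_mul hL.le]
    congr 1
    ring
  rw [sqrt_split, stirlingSeq]
  field_simp

end StirlingSeq

section Multinomial

open Stirling

variable {A : Type*} [Fintype A] {P : A → ℝ}

lemma two_rpow_mul_entropy (hP : ∀ i, 0 < P i) (x : ℝ) :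
    (2 : ℝ) ^ (x * entropy P) = (∏ i, P i ^ (x * P i))⁻¹ := by
  have factor (i : A) : P i ^ (x * P i) = 2 ^ (x * (P i * Real.logb 2 (P i))) := by
    rw [show x * (P i * Real.logb 2 (P i)) = Real.logb 2 (P i) * (x * P i) by ring,
      Real.rpow_mul zero_le_two, Real.rpow_logb two_pos one_lt_two.ne' (hP i)]
  simp only [factor]
  rw [entropy, mul_neg, Real.rpow_neg zero_le_two, Finset.mul_sum, Real.rpow_sum_of_pos two_pos]

variable {x L : ℝ} {c : A → ℕ}

lemma prod_factorial_eq_prod_stirlingSeq_mul (hx : 0 < x) (hc : ∀ i, c i ≠ 0)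
    (hP : ∀ i, x * P i = c i) (hL : 0 < L) :
    ∏ i, ((c i).factorial : ℝ) = (∏ i, stirlingSeq (c i) / √L) *
      √((2 * L * x) ^ Fintype.card A * ∏ i, P i) *
      ((x / Real.exp 1) ^ (∑ i, c i) / 2 ^ (x * entropy P)) := by
  have P_pos (i : A) : 0 < P i :=
    pos_of_mul_pos_right (hP i ▸ Nat.cast_pos.mpr (Nat.pos_of_ne_zero (hc i))) hx.le
  have factor (i : A) : ((c i).factorial : ℝ) = stirlingSeq (c i) / √L *
      √(2 * L * x * P i) * ((x / Real.exp 1) ^ c i * P i ^ (x * P i)) := by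
    rw [factorial_eq_stirlingSeq_div_sqrt_mul (hc i) hL, hP i, Real.rpow_natCast, ← mul_pow,
      ← hP i]
    ring_nf
  simp only [factor, Finset.prod_mul_distrib]
  rw [two_rpow_mul_entropy P_pos, div_inv_eq_mul, Finset.prod_pow_eq_pow_sum,
    ← Real.sqrt_prod _ fun i _ ↦ by have := P_pos i; positivity, Finset.prod_mul_distrib,
    Finset.prod_const, Finset.card_univ]

lemma factorial_div_prod_factorial_eq_stirlingSeq_mul [Nonempty A] {n : ℕ} (hc : ∀ i, c i ≠ 0)
    (hcsum : ∑ i, c i = n) (hP : ∀ i, n * P i = c i) (hL : 0 < L) :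
    (n.factorial : ℝ) / ∏ i, ((c i).factorial : ℝ) =
      stirlingSeq n / √L / (∏ i, stirlingSeq (c i) / √L) *
        (2 ^ (n * entropy P) / √((2 * L * n) ^ (Fintype.card A - 1) * ∏ i, P i)) := by
  have n_pos : 0 < n :=
    hcsum ▸ Finset.sum_pos (fun i _ ↦ Nat.pos_of_ne_zero (hc i)) Finset.univ_nonempty
  have sqrt_split : √((2 * L * n) ^ Fintype.card A * ∏ i, P i) =
      √(2 * L * n) * √((2 * L * n) ^ (Fintype.card A - 1) * ∏ i, P i) := by
    rw [← Real.sqrt_mul (by positivity), ← mul_assoc, mul_pow_sub_one Fintype.card_ne_zero]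
  have cancel {u v y z w q : ℝ} (hy : y ≠ 0) (hw : w ≠ 0) :
      u * y * w / (v * (y * z) * (w / q)) = u / v * (q / z) := by
    field_simp
  rw [prod_factorial_eq_prod_stirlingSeq_mul (Nat.cast_pos.mpr n_pos) hc hP hL, hcsum,
    factorial_eq_stirlingSeq_div_sqrt_mul n_pos.ne' hL, sqrt_split]
  exact cancel (by positivity) (by positivity)

end Multinomial

/-- Let `P` be a pmf on a finite alphabet `A` with `n·P i = c i` a
positive integer for every `i` (so `∑ i, c i = n`).  Then the multinomial coefficient
`n!/∏ i (c i)!` satisfies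
`2^{n·H(P)} / √((8n)^{|A|−1}·∏ i P i) ≤ n!/∏ i (c i)! ≤ 2^{n·H(P)} / √((2πn)^{|A|−1}·∏ i P i)`. -/
theorem multinomial_coefficient_bounds {A : Type*} [Fintype A] (n : ℕ) (hn : 0 < n)
    (P : A → ℝ) (c : A → ℕ)
    (hc : ∀ i, 0 < c i) (hcsum : ∑ i, c i = n)
    (hP : ∀ i, P i = (c i : ℝ) / n) :
    (2 : ℝ) ^ ((n : ℝ) * entropy P) /
        Real.sqrt ((8 * (n : ℝ)) ^ (Fintype.card A - 1) * ∏ i, P i)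
      ≤ (n.factorial : ℝ) / ∏ i, ((c i).factorial : ℝ)
    ∧ (n.factorial : ℝ) / ∏ i, ((c i).factorial : ℝ)
      ≤ (2 : ℝ) ^ ((n : ℝ) * entropy P) /
          Real.sqrt ((2 * Real.pi * (n : ℝ)) ^ (Fintype.card A - 1) * ∏ i, P i) := by
  have : Nonempty A := by
    by_contra! h
    simp [← hcsum] at hn
  have hc_ne (i : A) : c i ≠ 0 := (hc i).ne'
  have n_mul_P (i : A) : n * P i = c i := by rw [hP i, mul_div_cancel₀ _ (by positivity)]
  constructor
  · have prod_pos : 0 < ∏ i, Stirling.stirlingSeq (c i) / 2 :=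
      Finset.prod_pos fun i _ ↦ half_pos (stirlingSeq_pos (hc_ne i))
    have prod_le : ∏ i, Stirling.stirlingSeq (c i) / 2 ≤ Stirling.stirlingSeq n / 2 :=
      hcsum ▸ prod_stirlingSeq_div_two_le Finset.univ_nonempty fun i _ ↦ hc_ne i
    have sqrt_four : √(4 : ℝ) = 2 := Real.sqrt_eq_cases.mpr (by norm_num)
    rw [factorial_div_prod_factorial_eq_stirlingSeq_mul hc_ne hcsum n_mul_P four_pos, sqrt_four,
      show (2 * 4 : ℝ) = 8 by norm_num]
    exact le_mul_of_one_le_left (by positivity) ((one_le_div₀ prod_pos).mpr prod_le)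
  · have prod_pos : 0 < ∏ i, Stirling.stirlingSeq (c i) / √Real.pi :=
      Finset.prod_pos fun i _ ↦ div_pos (stirlingSeq_pos (hc_ne i)) (by positivity)
    have le_prod : Stirling.stirlingSeq n / √Real.pi ≤ ∏ i, Stirling.stirlingSeq (c i) / √Real.pi :=
      hcsum ▸ stirlingSeq_sum_div_sqrt_pi_le Finset.univ_nonempty fun i _ ↦ hc_ne i
    rw [factorial_div_prod_factorial_eq_stirlingSeq_mul hc_ne hcsum n_mul_P Real.pi_pos]
    exact mul_le_of_le_one_left (by positivity) ((div_le_one₀ prod_pos).mpr le_prod)
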